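/- arXiv:1805.12164 — 3 statements merged into one kernel-verified Lean document; each statement's English description precedes it below -/
import Mathlib

section
/- Let i, j : Fin n and let vᵢ, vⱼ, vᵢ', vⱼ' ∈ EuclideanSpace ℝ (Fin k) satisfy ⟪vᵢ, vᵢ'⟫ = PMI i i, ⟪vⱼ, vⱼ'⟫ = PMI j j, ⟪vᵢ, vⱼ'⟫ = PMI i j, and ⟪vⱼ, vᵢ'⟫ = PMI j i. Assume the joint probabilities are symmetric: q i j = q j i. Then Real.log (q i j) = -(⟪vᵢ - vⱼ, vᵢ' - vⱼ'⟫ / 2) + Real.log (q i i * q j j) / 2. -/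
open scoped RealInnerProductSpace

/-- Second equation of the paper's Corollary 1: the log joint probability of
a word pair is recovered from the inner product of differences of their
target and context vectors together with their self-joint probabilities. -/
theorem corollary1_joint (n k : ℕ) (hn : 0 < n) (hk : 0 < k)
    (p : Fin n → ℝ) (q : Fin n → Fin n → ℝ)
    (hp : ∀ i, 0 < p i) (hq : ∀ i j, 0 < q i j)
    (i j : Fin n)
    (vi vj vi' vj' : EuclideanSpace ℝ (Fin k))
    (hii : ⟪vi, vi'⟫ = Real.log (q i i / (p i * p i)))
    (hjj : ⟪vj, vj'⟫ = Real.log (q j j / (p j * p j)))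
    (hij : ⟪vi, vj'⟫ = Real.log (q i j / (p i * p j)))
    (hji : ⟪vj, vi'⟫ = Real.log (q j i / (p j * p i)))
    (hsym : q i j = q j i) :
    Real.log (q i j) = -(⟪vi - vj, vi' - vj'⟫ / 2) + Real.log (q i i * q j j) / 2 := by
  have L : ∀ a b, Real.log (q a b / (p a * p b)) =
      Real.log (q a b) - (Real.log (p a) + Real.log (p b)) := fun a b => by
    rw [Real.log_div (hq a b).ne' (mul_pos (hp a) (hp b)).ne',
      Real.log_mul (hp a).ne' (hp b).ne']
  rw [inner_sub_left, inner_sub_right, inner_sub_right, hii, hjj, hij, hji, L, L, L, L,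
    Real.log_mul (hq i i).ne' (hq j j).ne', ← hsym]
  ring
end

section
/- Let i, j : Fin n and let vᵢ, vⱼ, vᵢ', vⱼ' ∈ EuclideanSpace ℝ (Fin k) satisfy ⟪vᵢ, vᵢ'⟫ = PMI i i, ⟪vⱼ, vⱼ'⟫ = PMI j j, ⟪vᵢ, vⱼ'⟫ = PMI i j, and ⟪vⱼ, vᵢ'⟫ = PMI j i. Assume q i j = q j i. Then Real.exp (-(⟪vᵢ - vⱼ, vᵢ' - vⱼ'⟫ / 2)) = q i j / Real.sqrt (q i i * q j j). -/
open scoped RealInnerProductSpace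

/-- Exponential (quasi-spherical) form of the second equation of Corollary 1,
stated in the paper's equation (10). -/
theorem quasi_spherical_joint (n k : ℕ) (hn : 0 < n) (hk : 0 < k)
    (p : Fin n → ℝ) (q : Fin n → Fin n → ℝ)
    (hp : ∀ i, 0 < p i) (hq : ∀ i j, 0 < q i j)
    (i j : Fin n)
    (vi vj vi' vj' : EuclideanSpace ℝ (Fin k))
    (hii : ⟪vi, vi'⟫ = Real.log (q i i / (p i * p i)))
    (hjj : ⟪vj, vj'⟫ = Real.log (q j j / (p j * p j)))
    (hij : ⟪vi, vj'⟫ = Real.log (q i j / (p i * p j)))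
    (hji : ⟪vj, vi'⟫ = Real.log (q j i / (p j * p i)))
    (hsym : q i j = q j i) :
    Real.exp (-(⟪vi - vj, vi' - vj'⟫ / 2)) = q i j / Real.sqrt (q i i * q j j) := by
  have l : ∀ a b : Fin n, Real.log (q a b / (p a * p b))
      = Real.log (q a b) - (Real.log (p a) + Real.log (p b)) := by
    intro a b
    rw [Real.log_div (hq a b).ne' (mul_pos (hp a) (hp b)).ne',
      Real.log_mul (hp a).ne' (hp b).ne']
  have hpos : 0 < q i i * q j j := mul_pos (hq i i) (hq j j)
  have hr : 0 < q i j / Real.sqrt (q i i * q j j) :=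
    div_pos (hq i j) (Real.sqrt_pos.mpr hpos)
  rw [← Real.exp_log hr]
  congr 1
  rw [Real.log_div (hq i j).ne' (Real.sqrt_pos.mpr hpos).ne', Real.log_sqrt hpos.le,
    Real.log_mul (hq i i).ne' (hq j j).ne', inner_sub_left, inner_sub_right,
    inner_sub_right, hii, hjj, hij, hji, l, l, l, l, ← hsym]
  ring
end

section
/- Let s, t : Fin k → ℝ be vectors with ∑ m, s m * t m = 0 and ∑ m, (t m)^2 = 1, and let d be a real number with 0 ≤ d and d^2 < ∑ m, (s m)^2. Set b := Real.sqrt ((∑ m, (s m)^2) - d^2), and define complex vectors v, v' : Fin k → ℂ by v m := (s m : ℂ) + b * Complex.I * (t m : ℂ) and v' m := (s m : ℂ) - b * Complex.I * (t m : ℂ). Then: (i) v' m = starRingEnd ℂ (v m) for every m (v and v' are componentwise complex conjugates); (ii) ∑ m, starRingEnd ℂ (v m) * v' m = (d^2 : ℂ); and (iii) ∑ m, Complex.normSq (v m) = ∑ m, Complex.normSq (v' m) (v and v' have equal norms). -/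
/-- The paper's Theorem 2 (Section 3.5, case (iii)): when a word's required
minimum length d is shorter than the norm of the real component s, the word's
target and context vectors arise as a complex-conjugate pair
v = s + i b t̂, v' = s − i b t̂, sharing the real component s, having equal
norms, and with Hermitian inner product equal to d². -/
theorem complex_conjugate_vectors (k : ℕ) (s t : Fin k → ℝ)
    (hst : ∑ m, s m * t m = 0) (ht : ∑ m, (t m) ^ 2 = 1)
    (d : ℝ) (hd : 0 ≤ d) (hds : d ^ 2 < ∑ m, (s m) ^ 2)
    (b : ℝ) (hb : b = Real.sqrt ((∑ m, (s m) ^ 2) - d ^ 2))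
    (v v' : Fin k → ℂ)
    (hv : ∀ m, v m = (s m : ℂ) + (b : ℂ) * Complex.I * (t m : ℂ))
    (hv' : ∀ m, v' m = (s m : ℂ) - (b : ℂ) * Complex.I * (t m : ℂ)) :
    (∀ m, v' m = starRingEnd ℂ (v m)) ∧
    (∑ m, starRingEnd ℂ (v m) * v' m = (d ^ 2 : ℂ)) ∧
    (∑ m, Complex.normSq (v m) = ∑ m, Complex.normSq (v' m)) := by
  have h1 : ∀ m, v' m = starRingEnd ℂ (v m) := by
    intro m
    rw [hv, hv']
    simp [sub_eq_add_neg]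
  refine ⟨h1, ?_, ?_⟩
  · have hb2 : b ^ 2 = (∑ m, (s m) ^ 2) - d ^ 2 := by
      rw [hb, Real.sq_sqrt (by linarith)]
    have e : ∀ m, starRingEnd ℂ (v m) * v' m =
        ((s m ^ 2 : ℝ) : ℂ) - 2 * b * Complex.I * ((s m * t m : ℝ) : ℂ)
          - (b : ℂ) ^ 2 * ((t m ^ 2 : ℝ) : ℂ) := by
      intro m
      rw [← h1, hv']
      push_cast
      linear_combination ((b : ℂ) ^ 2 * (t m : ℂ) ^ 2) * Complex.I_sq
    simp_rw [e]
    rw [Finset.sum_sub_distrib, Finset.sum_sub_distrib, ← Finset.mul_sum, ← Finset.mul_sum,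
      ← Complex.ofReal_sum, ← Complex.ofReal_sum, ← Complex.ofReal_sum, hst, ht,
      ← Complex.ofReal_pow, hb2]
    push_cast
    ring
  · refine Finset.sum_congr rfl fun m _ => ?_
    rw [h1, Complex.normSq_conj]
end
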